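/- arXiv:2307.07596 — 3 statements merged into one kernel-verified Lean document; each statement's English description precedes it below -/
import Mathlib

section
/- Let T > 0 and let φ : [0,T] → [0,∞) be a continuous function. Let α, β ≥ 0 be constants. If for all t ∈ [0,T] one has φ(t) ≤ α + β (∫₀ᵗ φ(s)² ds)^{1/2}, then for all t ∈ [0,T] one has φ(t) ≤ α (1 + β² t)^{1/2} · exp(1/2 + (1/2) β² t). -/
open MeasureTheory

/-- Grönwall's inequality in integral form, with constant coefficients. -/
theorem le_mul_exp_of_le_add_mul_integral {f : ℝ → ℝ} {a K T : ℝ} (hK : 0 ≤ K)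
    (hf : ContinuousOn f (Set.Icc 0 T))
    (h : ∀ t ∈ Set.Icc (0:ℝ) T, f t ≤ a + K * ∫ s in (0:ℝ)..t, f s) :
    ∀ t ∈ Set.Icc (0:ℝ) T, f t ≤ a * Real.exp (K * t) := by
  intro t ht
  have hT : 0 ≤ T := ht.1.trans ht.2
  set g : ℝ → ℝ := Set.IccExtend hT ((Set.Icc 0 T).domRestrict f)
  have hg : Continuous g := hf.domRestrict.Icc_extend'
  have hgf : ∀ s ∈ Set.Icc (0:ℝ) T, g s = f s := fun s hs =>
    Set.IccExtend_of_mem hT _ hs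
  have hint : ∀ s ∈ Set.Icc (0:ℝ) T, ∫ r in (0:ℝ)..s, f r = ∫ r in (0:ℝ)..s, g r := by
    intro s hs
    refine intervalIntegral.integral_congr fun r hr => (hgf r ?_).symm
    rw [Set.uIcc_of_le hs.1] at hr
    exact ⟨hr.1, hr.2.trans hs.2⟩
  have hderiv : ∀ x, HasDerivAt (fun s => a + K * ∫ r in (0:ℝ)..s, g r) (K * g x) x := fun x =>
    ((hg.integral_hasStrictDerivAt 0 x).hasDerivAt.const_mul K).const_add a
  have hbound := le_gronwallBound_of_liminf_deriv_right_le (δ := a) (K := K) (ε := 0)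
    (a := 0) (b := T)
    (fun x _ => (hderiv x).continuousAt.continuousWithinAt)
    (fun x _ r hr => (hderiv x).hasDerivWithinAt.liminf_right_slope_le hr)
    (by simp)
    (fun x hx => by
      have hx' := Set.Ico_subset_Icc_self hx
      rw [add_zero, hgf x hx', ← hint x hx']
      exact mul_le_mul_of_nonneg_left (h x hx') hK) t ht
  rw [gronwallBound_ε0, sub_zero, ← hint t ht] at hbound
  exact (h t ht).trans hbound

/-- Young's inequality for the square of a sum, with parameter `c`. -/
theorem add_sq_le_one_add_mul_sq {x y c : ℝ} (hc : 0 < c) :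
    (x + y) ^ 2 ≤ (1 + c) * x ^ 2 + (1 + c⁻¹) * y ^ 2 := by
  have key : (1 + c) * x ^ 2 + (1 + c⁻¹) * y ^ 2 - (x + y) ^ 2 = c⁻¹ * (c * x - y) ^ 2 := by
    field_simp
    ring
  have : 0 ≤ c⁻¹ * (c * x - y) ^ 2 := by positivity
  linarith

/-- Continuous Gronwall-type lemma with square root of the integral of the square. -/
theorem continuous_gronwall_sqrt
    (T : ℝ) (hT : 0 < T) (φ : ℝ → ℝ)
    (hcont : ContinuousOn φ (Set.Icc 0 T))
    (hnonneg : ∀ t ∈ Set.Icc (0:ℝ) T, 0 ≤ φ t)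
    (α β : ℝ) (hα : 0 ≤ α) (hβ : 0 ≤ β)
    (h : ∀ t ∈ Set.Icc (0:ℝ) T,
      φ t ≤ α + β * Real.sqrt (∫ s in (0:ℝ)..t, (φ s)^2)) :
    ∀ t ∈ Set.Icc (0:ℝ) T,
      φ t ≤ α * Real.sqrt (1 + β^2 * t) * Real.exp (1/2 + β^2 * t / 2) := by
  intro t ht
  have ht0 : 0 ≤ t := ht.1
  have hc0 : 0 ≤ β ^ 2 * t := by positivity
  rcases hc0.eq_or_lt with hc | hc
  · have hφ : φ t ≤ α := by
      rcases mul_eq_zero.mp hc.symm with hb | h0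
      · simpa [pow_eq_zero_iff two_ne_zero |>.mp hb] using h t ht
      · simpa [h0] using h t ht
    rw [← hc]
    have : 1 ≤ Real.exp (1 / 2 + 0 / 2) := Real.one_le_exp (by norm_num)
    rw [add_zero, Real.sqrt_one, mul_one]
    exact hφ.trans (le_mul_of_one_le_right hα this)
  · set c := β ^ 2 * t with hc_def
    have hsq : φ t ^ 2 ≤ (1 + c) * α ^ 2 * Real.exp ((1 + c⁻¹) * β ^ 2 * t) := by
      refine le_mul_exp_of_le_add_mul_integral (f := fun s => φ s ^ 2) (by positivity)
        (hcont.pow 2) (fun s hs => ?_) t ht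
      have hI : 0 ≤ ∫ r in (0:ℝ)..s, φ r ^ 2 :=
        intervalIntegral.integral_nonneg hs.1 fun r _ => sq_nonneg _
      calc φ s ^ 2 ≤ (α + β * Real.sqrt (∫ r in (0:ℝ)..s, φ r ^ 2)) ^ 2 :=
            pow_le_pow_left₀ (hnonneg s hs) (h s hs) 2
        _ ≤ _ := add_sq_le_one_add_mul_sq hc
        _ = _ := by rw [mul_pow, Real.sq_sqrt hI]; ring
    have hexp : (1 + c⁻¹) * β ^ 2 * t = 1 + c := by
      rw [mul_assoc, ← hc_def]
      field_simp
      ring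
    rw [hexp] at hsq
    refine le_of_sq_le_sq ?_ (by positivity)
    have hdouble : ((2 : ℕ) : ℝ) * (1 / 2 + c / 2) = 1 + c := by
      push_cast
      ring
    rwa [mul_pow, mul_pow, Real.sq_sqrt (by positivity), ← Real.exp_nat_mul, hdouble,
      mul_comm (α ^ 2)]
end

section
/- Let (φ_j)_{j≥0} be a sequence of nonnegative real numbers and let α, β ≥ 0 be constants. If for every j ≥ 0 one has φ_j ≤ α + β (∑_{i=0}^{j−1} φ_i²)^{1/2}, then for every j ≥ 0 one has φ_j ≤ α (1 + β² j)^{1/2} · exp(1/2 + (1/2) β² j). -/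
/-- Discrete Gronwall inequality with a constant coefficient. -/
theorem add_mul_sum_le_mul_one_add_pow {u : ℕ → ℝ} {A c : ℝ} (hc : 0 ≤ c)
    (h : ∀ n, u n ≤ A + c * ∑ i ∈ Finset.range n, u i) (n : ℕ) :
    A + c * ∑ i ∈ Finset.range n, u i ≤ A * (1 + c) ^ n := by
  induction n with
  | zero => simp
  | succ n ih =>
    calc A + c * ∑ i ∈ Finset.range (n + 1), u i
        = (A + c * ∑ i ∈ Finset.range n, u i) + c * u n := by
          rw [Finset.sum_range_succ]; ring
      _ ≤ (A + c * ∑ i ∈ Finset.range n, u i)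
            + c * (A + c * ∑ i ∈ Finset.range n, u i) := by gcongr; exact h n
      _ = (A + c * ∑ i ∈ Finset.range n, u i) * (1 + c) := by ring
      _ ≤ A * (1 + c) ^ n * (1 + c) := by gcongr
      _ = A * (1 + c) ^ (n + 1) := by ring

/-- Weighted Young inequality for the square of a sum. -/
theorem add_mul_sq_le_weighted (α β s : ℝ) {t : ℝ} (ht : 0 < t) :
    (α + β * s) ^ 2 ≤ α ^ 2 * (1 + β ^ 2 * t) + (β ^ 2 + 1 / t) * s ^ 2 := by
  have key : α ^ 2 * (1 + β ^ 2 * t) + (β ^ 2 + 1 / t) * s ^ 2 - (α + β * s) ^ 2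
      = (β * t * α - s) ^ 2 / t := by
    field_simp
    ring
  have : 0 ≤ (β * t * α - s) ^ 2 / t := by positivity
  linarith

/-- Discrete Gronwall-type lemma with square root of the sum of squares. -/
theorem discrete_gronwall_sqrt
    (φ : ℕ → ℝ) (hnonneg : ∀ j, 0 ≤ φ j)
    (α β : ℝ) (hα : 0 ≤ α) (hβ : 0 ≤ β)
    (h : ∀ j, φ j ≤ α + β * Real.sqrt (∑ i ∈ Finset.range j, (φ i)^2)) :
    ∀ j, φ j ≤ α * Real.sqrt (1 + β^2 * j) * Real.exp (1/2 + β^2 * j / 2) := by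
  intro j
  rcases Nat.eq_zero_or_pos j with rfl | hj
  · have h0 : φ 0 ≤ α := by simpa using h 0
    have he : 1 ≤ Real.exp (1 / 2) := Real.one_le_exp (by norm_num)
    simpa using h0.trans (le_mul_of_one_le_right hα he)
  have ht : (0 : ℝ) < j := by exact_mod_cast hj
  have hsq : ∀ n, φ n ^ 2 ≤ α ^ 2 * (1 + β ^ 2 * j)
      + (β ^ 2 + 1 / j) * ∑ i ∈ Finset.range n, φ i ^ 2 := fun n => by
    have hS : 0 ≤ ∑ i ∈ Finset.range n, φ i ^ 2 := Finset.sum_nonneg fun i _ => sq_nonneg _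
    have hy := add_mul_sq_le_weighted α β √(∑ i ∈ Finset.range n, φ i ^ 2) ht
    rw [Real.sq_sqrt hS] at hy
    exact (pow_le_pow_left₀ (hnonneg n) (h n) 2).trans hy
  have hexp : (1 + (β ^ 2 + 1 / (j : ℝ))) ^ j ≤ Real.exp (1 / 2 + β ^ 2 * j / 2) ^ 2 := by
    calc (1 + (β ^ 2 + 1 / (j : ℝ))) ^ j ≤ Real.exp (β ^ 2 + 1 / j) ^ j := by
          gcongr
          linarith [Real.add_one_le_exp (β ^ 2 + 1 / (j : ℝ))]
      _ = Real.exp (1 / 2 + β ^ 2 * j / 2) ^ 2 := by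
          rw [← Real.exp_nat_mul, ← Real.exp_nat_mul]
          congr 1
          push_cast
          field_simp
          ring
  refine (sq_le_sq₀ (hnonneg j) (by positivity)).mp ?_
  calc φ j ^ 2 ≤ α ^ 2 * (1 + β ^ 2 * j) * (1 + (β ^ 2 + 1 / (j : ℝ))) ^ j :=
        (hsq j).trans (add_mul_sum_le_mul_one_add_pow (by positivity) hsq j)
    _ ≤ α ^ 2 * (1 + β ^ 2 * j) * Real.exp (1 / 2 + β ^ 2 * j / 2) ^ 2 := by gcongr
    _ = (α * √(1 + β ^ 2 * j) * Real.exp (1 / 2 + β ^ 2 * j / 2)) ^ 2 := by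
        rw [mul_pow, mul_pow, Real.sq_sqrt (by positivity)]
end

section
/- Let X be a (2,D)-smooth Banach space for some D ≥ 1, let (Ω, F, P) be a probability space with a finite filtration (F_j)_{j=0}^ℓ, and let 2 ≤ p < ∞. Suppose (M̃_j)_{j=0}^ℓ is an adapted sequence of X-valued random variables, (M_j)_{j=0}^ℓ is an X-valued martingale with respect to (F_j)_{j=0}^ℓ with difference sequence d_j := M_j − M_{j−1} (1 ≤ j ≤ ℓ), and (V_j)_{j=1}^ℓ is a sequence of random contractions on X that is strongly predictable. Assume M̃_0 = M_0 = 0 and M̃_j = V_j M̃_{j−1} + d_j for j = 1, …, ℓ. Then, writing (M̃)* := max_{0≤j≤ℓ} ‖M̃_j‖, d* := max_{1≤j≤ℓ} ‖d_j‖, and s(M) := (∑_{i=1}^ℓ E[‖d_i‖² | F_{i−1}])^{1/2}, one has ‖(M̃)*‖_{L^p(Ω)} ≤ 30 p ‖d*‖_{L^p(Ω)} + 40 D √p ‖s(M)‖_{L^p(Ω)}. -/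
open MeasureTheory

/-- The smoothed exponential of the norm, `exp √(1 + ‖x‖²)`. -/
noncomputable def smoothExpNorm {X : Type*} [NormedAddCommGroup X] (x : X) : ℝ :=
  Real.exp √(1 + ‖x‖ ^ 2)

/-- The derivative of `r ↦ √(1 + r²)` at `r = ‖x‖`. -/
noncomputable def smoothNormSlope {X : Type*} [NormedAddCommGroup X] (x : X) : ℝ :=
  ‖x‖ / √(1 + ‖x‖ ^ 2)

section Potential

variable {X : Type*} [NormedAddCommGroup X]

lemma one_le_sqrt_one_add_sq (r : ℝ) : 1 ≤ √(1 + r ^ 2) :=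
  Real.one_le_sqrt.2 (by nlinarith [sq_nonneg r])

lemma smoothNormSlope_nonneg (x : X) : 0 ≤ smoothNormSlope x := by
  unfold smoothNormSlope; positivity

lemma smoothNormSlope_le_one (x : X) : smoothNormSlope x ≤ 1 := by
  unfold smoothNormSlope
  refine div_le_one_of_le₀ ?_ (Real.sqrt_nonneg _)
  exact Real.le_sqrt_of_sq_le (by linarith)

lemma smoothExpNorm_pos (x : X) : 0 < smoothExpNorm x := Real.exp_pos _

lemma smoothExpNorm_zero : smoothExpNorm (0 : X) = Real.exp 1 := by
  simp [smoothExpNorm]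

lemma smoothExpNorm_mono {x y : X} (h : ‖x‖ ≤ ‖y‖) : smoothExpNorm x ≤ smoothExpNorm y := by
  unfold smoothExpNorm; gcongr

lemma exp_norm_le_smoothExpNorm (x : X) : Real.exp ‖x‖ ≤ smoothExpNorm x :=
  Real.exp_le_exp.2 (Real.le_sqrt_of_sq_le (by linarith))

lemma smoothExpNorm_le_exp (x : X) : smoothExpNorm x ≤ Real.exp (1 + ‖x‖) := by
  refine Real.exp_le_exp.2 (Real.sqrt_le_iff.2 ⟨by positivity, ?_⟩)
  nlinarith [norm_nonneg x]

lemma sqrt_one_add_sq_lipschitz {r s : ℝ} (hr : 0 ≤ r) :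
    √(1 + r ^ 2) - √(1 + s ^ 2) ≤ |r - s| := by
  have h1 : r ≤ √(1 + r ^ 2) := Real.le_sqrt_of_sq_le (by linarith)
  have h2 : s ≤ √(1 + s ^ 2) := Real.le_sqrt_of_sq_le (by linarith)
  have h3 := Real.sq_sqrt (show 0 ≤ 1 + r ^ 2 by positivity)
  have h4 := Real.sq_sqrt (show 0 ≤ 1 + s ^ 2 by positivity)
  have h5 := one_le_sqrt_one_add_sq r
  have h6 := one_le_sqrt_one_add_sq s
  rcases le_total r s with h | h
  · have : √(1 + r ^ 2) ≤ √(1 + s ^ 2) := by gcongr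
    linarith [abs_nonneg (r - s)]
  · rw [abs_of_nonneg (by linarith)]
    by_contra! hc
    nlinarith

lemma smoothExpNorm_add_le_exp (x y : X) :
    smoothExpNorm (x + y) ≤ smoothExpNorm x * Real.exp ‖y‖ := by
  unfold smoothExpNorm
  rw [← Real.exp_add]
  refine Real.exp_le_exp.2 ?_
  have h1 := sqrt_one_add_sq_lipschitz (s := ‖x‖) (norm_nonneg (x + y))
  have h2 := abs_norm_sub_norm_le (x + y) x
  rw [add_sub_cancel_left] at h2
  linarith

lemma smoothExpNorm_tangent_le (x z : X) :
    smoothExpNorm x * (1 + smoothNormSlope x * (‖z‖ - ‖x‖)) ≤ smoothExpNorm z := by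
  have hx := one_le_sqrt_one_add_sq ‖x‖
  have hcs : smoothNormSlope x * (‖z‖ - ‖x‖) ≤ √(1 + ‖z‖ ^ 2) - √(1 + ‖x‖ ^ 2) := by
    unfold smoothNormSlope
    rw [div_mul_eq_mul_div, div_le_iff₀ (by linarith)]
    have h : 1 + ‖z‖ * ‖x‖ ≤ √(1 + ‖z‖ ^ 2) * √(1 + ‖x‖ ^ 2) := by
      rw [← Real.sqrt_mul (by positivity)]
      exact Real.le_sqrt_of_sq_le (by nlinarith [sq_nonneg (‖z‖ - ‖x‖)])
    nlinarith [Real.sq_sqrt (show 0 ≤ 1 + ‖x‖ ^ 2 by positivity)]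
  have he : smoothExpNorm z =
      smoothExpNorm x * Real.exp (√(1 + ‖z‖ ^ 2) - √(1 + ‖x‖ ^ 2)) := by
    unfold smoothExpNorm; rw [← Real.exp_add]; congr 1; ring
  rw [he]
  refine mul_le_mul_of_nonneg_left ?_ (smoothExpNorm_pos x).le
  linarith [Real.add_one_le_exp (√(1 + ‖z‖ ^ 2) - √(1 + ‖x‖ ^ 2))]

lemma exp_le_one_add_two_mul {t : ℝ} (h0 : 0 ≤ t) (h1 : t ≤ 1) : Real.exp t ≤ 1 + 2 * t := by
  have := (abs_le.1 (Real.abs_exp_sub_one_sub_id_le (x := t) (by rwa [abs_of_nonneg h0]))).2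
  nlinarith

lemma smoothExpNorm_second_difference {D : ℝ} (hD : 1 ≤ D)
    (hsmooth : ∀ x y : X, ‖x + y‖ ^ 2 + ‖x - y‖ ^ 2 ≤ 2 * ‖x‖ ^ 2 + 2 * D ^ 2 * ‖y‖ ^ 2)
    (x y : X) (hy : ‖y‖ ≤ 1) :
    smoothExpNorm (x + y) + smoothExpNorm (x - y) ≤
      2 * (smoothExpNorm x * (1 + 2 * (D ^ 2 * ‖y‖ ^ 2))) := by
  have hpos := smoothExpNorm_pos x
  rcases le_total (D ^ 2 * ‖y‖ ^ 2) 1 with h | h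
  · have hsq : ‖y‖ ^ 2 ≤ D ^ 2 * ‖y‖ ^ 2 := by
      nlinarith [sq_nonneg ‖y‖, mul_nonneg (sub_nonneg.2 hD) (sq_nonneg ‖y‖)]
    set a := √(1 + ‖x + y‖ ^ 2) with ha
    set b := √(1 + ‖x - y‖ ^ 2) with hb
    set c := √(1 + ‖x‖ ^ 2) with hc
    have hc1 : 1 ≤ c := one_le_sqrt_one_add_sq _
    have ha2 : a ^ 2 = 1 + ‖x + y‖ ^ 2 := Real.sq_sqrt (by positivity)
    have hb2 : b ^ 2 = 1 + ‖x - y‖ ^ 2 := Real.sq_sqrt (by positivity)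
    have hc2 : c ^ 2 = 1 + ‖x‖ ^ 2 := Real.sq_sqrt (by positivity)
    have hmean : (a + b) / 2 ≤ c + D ^ 2 * ‖y‖ ^ 2 / 2 := by
      refine abs_le_of_sq_le_sq' ?_ (by positivity) |>.2
      nlinarith [sq_nonneg (a - b), hsmooth x y, sq_nonneg (D ^ 2 * ‖y‖ ^ 2),
        mul_nonneg (sub_nonneg.2 hc1) (show 0 ≤ D ^ 2 * ‖y‖ ^ 2 by positivity)]
    have hdiff : |(a - b) / 2| ≤ ‖y‖ := by
      have h1 := sqrt_one_add_sq_lipschitz (s := ‖x - y‖) (norm_nonneg (x + y))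
      have h2 := sqrt_one_add_sq_lipschitz (s := ‖x + y‖) (norm_nonneg (x - y))
      have h3 := abs_norm_sub_norm_le (x + y) (x - y)
      have h4 : ‖x + y - (x - y)‖ ≤ 2 * ‖y‖ := by
        rw [show x + y - (x - y) = y + y by abel]
        linarith [norm_add_le y y]
      rw [abs_sub_comm] at h2
      rw [abs_le]; constructor <;> linarith
    have hcosh : Real.cosh ((a - b) / 2) ≤ Real.exp (‖y‖ ^ 2 / 2) := by
      refine (Real.cosh_le_exp_half_sq _).trans (Real.exp_le_exp.2 ?_)
      have := sq_le_sq' (by linarith [abs_nonneg ((a - b) / 2), norm_nonneg y]) hdiff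
      rw [sq_abs] at this
      linarith
    have hsum : Real.exp a + Real.exp b =
        2 * (Real.exp ((a + b) / 2) * Real.cosh ((a - b) / 2)) := by
      rw [Real.cosh_eq]
      have e1 : Real.exp a = Real.exp ((a + b) / 2) * Real.exp ((a - b) / 2) := by
        rw [← Real.exp_add]; congr 1; ring
      have e2 : Real.exp b = Real.exp ((a + b) / 2) * Real.exp (-((a - b) / 2)) := by
        rw [← Real.exp_add]; congr 1; ring
      rw [e1, e2]; ring
    have hexp : Real.exp ((a + b) / 2) * Real.cosh ((a - b) / 2) ≤
        Real.exp c * Real.exp (D ^ 2 * ‖y‖ ^ 2) := by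
      calc _ ≤ Real.exp (c + D ^ 2 * ‖y‖ ^ 2 / 2) * Real.exp (‖y‖ ^ 2 / 2) := by gcongr
        _ ≤ _ := by
          rw [← Real.exp_add, ← Real.exp_add]
          exact Real.exp_le_exp.2 (by linarith)
    unfold smoothExpNorm
    rw [hsum]
    refine mul_le_mul_of_nonneg_left (hexp.trans ?_) zero_le_two
    gcongr
    exact exp_le_one_add_two_mul (by positivity) h
  · have he : Real.exp ‖y‖ ≤ 3 :=
      (Real.exp_le_exp.2 hy).trans (by linarith [Real.exp_one_lt_d9])
    have h1 := smoothExpNorm_add_le_exp x y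
    have h2 := smoothExpNorm_add_le_exp x (-y)
    rw [norm_neg, ← sub_eq_add_neg] at h2
    nlinarith

/-- One-step domination of the truncated potential, affine in `‖y‖²` and `‖x - y‖`. -/
lemma smoothExpNorm_truncated_add_le {D : ℝ} (hD : 1 ≤ D)
    (hsmooth : ∀ x y : X, ‖x + y‖ ^ 2 + ‖x - y‖ ^ 2 ≤ 2 * ‖x‖ ^ 2 + 2 * D ^ 2 * ‖y‖ ^ 2)
    (x y : X) :
    (if ‖y‖ ≤ 1 then smoothExpNorm (x + y) else 0) ≤
      smoothExpNorm x *
        (1 + 4 * D ^ 2 * ‖y‖ ^ 2 - smoothNormSlope x * (‖x - y‖ - ‖x‖)) := by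
  split_ifs with hy
  · nlinarith [smoothExpNorm_second_difference hD hsmooth x y hy,
      smoothExpNorm_tangent_le x (x - y)]
  · refine mul_nonneg (smoothExpNorm_pos x).le ?_
    have h1 : ‖x - y‖ - ‖x‖ ≤ ‖y‖ := by linarith [norm_sub_le x y]
    have h2 : smoothNormSlope x * (‖x - y‖ - ‖x‖) ≤ ‖y‖ := by
      nlinarith [smoothNormSlope_nonneg x, smoothNormSlope_le_one x, norm_nonneg y]
    have h3 : ‖y‖ ≤ ‖y‖ ^ 2 := by nlinarith
    nlinarith [sq_nonneg ‖y‖, mul_nonneg (sub_nonneg.2 hD) (sq_nonneg ‖y‖)]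

lemma continuous_smoothExpNorm : Continuous (smoothExpNorm : X → ℝ) := by
  unfold smoothExpNorm; fun_prop

lemma continuous_smoothNormSlope : Continuous (smoothNormSlope : X → ℝ) := by
  unfold smoothNormSlope
  exact continuous_norm.div (by fun_prop)
    fun x => (zero_lt_one.trans_le (one_le_sqrt_one_add_sq ‖x‖)).ne'

end Potential

section RunningMax

variable {Ω X : Type*} [NormedAddCommGroup X]

/-- The running maximum of the norms of a process. -/
noncomputable def runningMax (f : ℕ → Ω → X) : ℕ → Ω → ℝ
  | 0 => fun ω => ‖f 0 ω‖
  | j + 1 => fun ω => max (runningMax f j ω) ‖f (j + 1) ω‖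

lemma le_runningMax (f : ℕ → Ω → X) {i j : ℕ} (hij : i ≤ j) (ω : Ω) :
    ‖f i ω‖ ≤ runningMax f j ω := by
  induction j, hij using Nat.le_induction with
  | base => cases i <;> simp [runningMax]
  | succ j _ ih => exact ih.trans (le_max_left _ _)

lemma runningMax_mono (f : ℕ → Ω → X) (ω : Ω) : Monotone fun j => runningMax f j ω :=
  monotone_nat_of_le_succ fun _ => le_max_left _ _

lemma runningMax_le (f : ℕ → Ω → X) {j : ℕ} {ω : Ω} {c : ℝ} (h : ∀ i ≤ j, ‖f i ω‖ ≤ c) :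
    runningMax f j ω ≤ c := by
  induction j with
  | zero => exact h 0 le_rfl
  | succ j ih => exact max_le (ih fun i hi => h i (hi.trans j.le_succ)) (h _ le_rfl)

lemma runningMax_nonneg (f : ℕ → Ω → X) (j : ℕ) (ω : Ω) : 0 ≤ runningMax f j ω :=
  (norm_nonneg _).trans (le_runningMax f le_rfl ω)

lemma stronglyMeasurable_runningMax {m0 : MeasurableSpace Ω} {ℱ : Filtration ℕ m0}
    {f : ℕ → Ω → X} (hf : ∀ j, StronglyMeasurable[ℱ j] (f j)) (j : ℕ) :
    StronglyMeasurable[ℱ j] (runningMax f j) := by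
  induction j with
  | zero => exact (hf 0).norm
  | succ j ih =>
    exact @StronglyMeasurable.sup _ _ _ _ (ℱ (j + 1)) _ _ _ (ih.mono (ℱ.mono j.le_succ))
      (hf (j + 1)).norm

end RunningMax

section Recursion

variable {Ω X : Type*} [NormedAddCommGroup X] [NormedSpace ℝ X]

lemma stronglyMeasurable_clm_apply {m : MeasurableSpace Ω} {V : Ω → X →L[ℝ] X}
    (hV : ∀ x, StronglyMeasurable fun ω => V ω x) {f : Ω → X} (hf : StronglyMeasurable f) :
    StronglyMeasurable fun ω => V ω (f ω) := by
  induction f, hf using StronglyMeasurable.induction with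
  | @ind c s hs =>
    have : (fun ω => V ω (s.indicator (fun _ => c) ω)) = s.indicator fun ω => V ω c := by
      ext ω; by_cases h : ω ∈ s <;> simp [h]
    rw [this]
    exact (hV c).indicator hs
  | @add f g hf hg hfg _ ihf ihg =>
    simp only [Pi.add_apply, map_add]
    exact ihf.add ihg
  | @lim f g hf hg ihf hlim =>
    refine stronglyMeasurable_of_tendsto Filter.atTop ihf ?_
    rw [tendsto_pi_nhds]
    exact fun ω => ((V ω).continuous.tendsto _).comp (hlim ω)

/-- The process `N₀ = 0`, `N_{j+1} = V_j N_j + d_j`. -/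
def affineRecursion (V : ℕ → Ω → X →L[ℝ] X) (d : ℕ → Ω → X) : ℕ → Ω → X
  | 0 => 0
  | j + 1 => fun ω => V j ω (affineRecursion V d j ω) + d j ω

/-- The event that the first `j` terms of `d` have norm at most one. -/
def smallJumps (d : ℕ → Ω → X) (j : ℕ) : Set Ω := {ω | ∀ i < j, ‖d i ω‖ ≤ 1}

/-- The potential of the recursion, discounted by the accumulated conditional variance and
restricted to small jumps and to the event `A j`. -/
noncomputable def discountedPotential (V : ℕ → Ω → X →L[ℝ] X) (d : ℕ → Ω → X) (σ : ℕ → Ω → ℝ)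
    (D : ℝ) (A : ℕ → Set Ω) (j : ℕ) : Ω → ℝ :=
  (A j ∩ smallJumps d j).indicator fun ω => smoothExpNorm (affineRecursion V d j ω) *
    Real.exp (-(4 * D ^ 2 * ∑ i ∈ Finset.range j, σ i ω))

/-- Predictable contractions `V` and martingale differences `d`, whose conditional second moments
are dominated by `σ`. -/
structure IsContractiveDriving {m0 : MeasurableSpace Ω} (μ : Measure Ω) (ℱ : Filtration ℕ m0)
    (V : ℕ → Ω → X →L[ℝ] X) (d : ℕ → Ω → X) (σ : ℕ → Ω → ℝ) : Prop where
  norm_le_one : ∀ i ω, ‖V i ω‖ ≤ 1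
  predictable : ∀ i x, StronglyMeasurable[ℱ i] fun ω => V i ω x
  adapted : ∀ i, StronglyMeasurable[ℱ (i + 1)] (d i)
  memLp : ∀ i, MemLp (d i) 2 μ
  condExp_eq_zero : ∀ i, μ[d i | ℱ i] =ᵐ[μ] 0
  nonneg : ∀ i ω, 0 ≤ σ i ω
  predictable_bound : ∀ i, StronglyMeasurable[ℱ i] (σ i)
  integrable_bound : ∀ i, Integrable (σ i) μ
  condExp_sq_le : ∀ i, μ[fun ω => ‖d i ω‖ ^ 2 | ℱ i] ≤ᵐ[μ] σ i

lemma norm_clm_apply_le {V : X →L[ℝ] X} (hV : ‖V‖ ≤ 1) (x : X) : ‖V x‖ ≤ ‖x‖ := by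
  simpa using V.le_of_opNorm_le hV x

lemma norm_affineRecursion_le {V : ℕ → Ω → X →L[ℝ] X} (hV : ∀ i ω, ‖V i ω‖ ≤ 1)
    (d : ℕ → Ω → X) (j : ℕ) (ω : Ω) :
    ‖affineRecursion V d j ω‖ ≤ ∑ i ∈ Finset.range j, ‖d i ω‖ := by
  induction j with
  | zero => simp [affineRecursion]
  | succ j ih =>
    rw [Finset.sum_range_succ]
    exact (norm_add_le _ _).trans
      (add_le_add ((norm_clm_apply_le (hV j ω) _).trans ih) le_rfl)

lemma integral_mul_le_of_condExp_le {m m0 : MeasurableSpace Ω} {μ : Measure Ω}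
    [IsFiniteMeasure μ] (hm : m ≤ m0) {w g h : Ω → ℝ} {C : ℝ} (hw : StronglyMeasurable[m] w)
    (hw0 : ∀ ω, 0 ≤ w ω) (hwC : ∀ ω, w ω ≤ C) (hg : Integrable g μ) (hh : Integrable h μ)
    (hgh : μ[g | m] ≤ᵐ[μ] h) :
    ∫ ω, w ω * g ω ∂μ ≤ ∫ ω, w ω * h ω ∂μ := by
  have hb : ∀ᵐ ω ∂μ, ‖w ω‖ ≤ C := .of_forall fun ω => by
    rw [Real.norm_of_nonneg (hw0 ω)]; exact hwC ω
  have hwm := (hw.mono hm).aestronglyMeasurable (μ := μ)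
  rw [← integral_condExp hm]
  refine integral_mono_ae integrable_condExp (hh.bdd_mul hwm hb) ?_
  filter_upwards [condExp_stronglyMeasurable_mul_of_bound hm hw hg C hb, hgh] with ω h1 h2
  exact h1.le.trans (mul_le_mul_of_nonneg_left h2 (hw0 ω))

lemma condExp_norm_sub_norm_sub_le_zero [CompleteSpace X] {m m0 : MeasurableSpace Ω}
    {μ : Measure Ω} [IsFiniteMeasure μ] (hm : m ≤ m0) {f d : Ω → X}
    (hf : StronglyMeasurable[m] f) (hfi : Integrable f μ) (hd : Integrable d μ)
    (hd0 : μ[d | m] =ᵐ[μ] 0) :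
    μ[fun ω => ‖f ω‖ - ‖f ω - d ω‖ | m] ≤ᵐ[μ] 0 := by
  have h1 : μ[f - d | m] =ᵐ[μ] f := by
    filter_upwards [condExp_sub hfi hd m, hd0] with ω h2 h3
    rw [h2, Pi.sub_apply, h3, condExp_of_stronglyMeasurable hm hf hfi]
    simp
  have h4 := condExp_sub hfi.norm (hfi.sub hd).norm m
  have h5 : μ[fun ω => ‖f ω‖ | m] = fun ω => ‖f ω‖ :=
    condExp_of_stronglyMeasurable hm hf.norm hfi.norm
  filter_upwards [h1, h4, norm_condExp_le (m := m) (μ := μ) (f - d)] with ω h1 h4 h6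
  have h7 : (μ[fun ω => ‖f ω‖ - ‖f ω - d ω‖ | m]) ω =
      ‖f ω‖ - (μ[fun ω => ‖(f - d) ω‖ | m]) ω := by
    rw [← congrFun h5 ω]; exact h4
  rw [h7, Pi.zero_apply]
  rw [h1] at h6
  linarith

lemma affineRecursion_eq_zero {V : ℕ → Ω → X →L[ℝ] X} {d : ℕ → Ω → X} {A : ℕ → Set Ω} (hAmono : Monotone A)
    (hdA : ∀ i ω, ω ∉ A i → d i ω = 0) {j : ℕ} {ω : Ω} (hω : ω ∉ A j) :
    affineRecursion V d (j + 1) ω = 0 := by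
  induction j with
  | zero => simp [affineRecursion, hdA 0 ω hω]
  | succ j ih =>
    have := ih fun h' => hω (hAmono j.le_succ h')
    change V (j + 1) ω (affineRecursion V d (j + 1) ω) + d (j + 1) ω = 0
    rw [this, map_zero, zero_add, hdA _ ω hω]

namespace IsContractiveDriving

variable {m0 : MeasurableSpace Ω} {μ : Measure Ω} {ℱ : Filtration ℕ m0}
  {V : ℕ → Ω → X →L[ℝ] X} {d : ℕ → Ω → X} {σ : ℕ → Ω → ℝ}

lemma stronglyMeasurable_affineRecursion (h : IsContractiveDriving μ ℱ V d σ) (j : ℕ) :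
    StronglyMeasurable[ℱ j] (affineRecursion V d j) := by
  induction j with
  | zero => exact stronglyMeasurable_zero
  | succ j ih =>
    exact ((stronglyMeasurable_clm_apply (h.predictable j) ih).mono (ℱ.mono j.le_succ)).add
      (h.adapted j)

lemma integrable_sq_norm (h : IsContractiveDriving μ ℱ V d σ) (i : ℕ) :
    Integrable (fun ω => ‖d i ω‖ ^ 2) μ :=
  MemLp.integrable_norm_pow (p := 2) (h.memLp i) two_ne_zero

lemma smul (h : IsContractiveDriving μ ℱ V d σ) [CompleteSpace X] (θ : ℝ) :
    IsContractiveDriving μ ℱ V (fun i => θ • d i) (fun i ω => θ ^ 2 * σ i ω) where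
  norm_le_one := h.norm_le_one
  predictable := h.predictable
  adapted i := (h.adapted i).const_smul θ
  memLp i := (h.memLp i).const_smul θ
  condExp_eq_zero i := by
    filter_upwards [condExp_smul (μ := μ) θ (d i) (ℱ i), h.condExp_eq_zero i] with ω h1 h2
    simp [h1, h2]
  nonneg i ω := mul_nonneg (sq_nonneg θ) (h.nonneg i ω)
  predictable_bound i := (h.predictable_bound i).const_mul _
  integrable_bound i := (h.integrable_bound i).const_mul _
  condExp_sq_le i := by
    have he : (fun ω => ‖(θ • d i) ω‖ ^ 2) = θ ^ 2 • fun ω => ‖d i ω‖ ^ 2 := by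
      ext ω; simp [norm_smul, mul_pow]
    rw [he]
    filter_upwards [condExp_smul (μ := μ) (θ ^ 2) (fun ω => ‖d i ω‖ ^ 2) (ℱ i),
      h.condExp_sq_le i] with ω h1 h2
    rw [h1]
    exact mul_le_mul_of_nonneg_left h2 (sq_nonneg θ)

variable [IsProbabilityMeasure μ]

lemma integrable (h : IsContractiveDriving μ ℱ V d σ) (i : ℕ) : Integrable (d i) μ :=
  (h.memLp i).integrable one_le_two

lemma integrable_affineRecursion (h : IsContractiveDriving μ ℱ V d σ) (j : ℕ) :
    Integrable (affineRecursion V d j) μ := by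
  refine Integrable.mono' (integrable_finsetSum (Finset.range j) fun i _ => (h.integrable i).norm)
    ((h.stronglyMeasurable_affineRecursion j).mono (ℱ.le j)).aestronglyMeasurable
    (.of_forall fun ω => norm_affineRecursion_le h.norm_le_one d j ω)

lemma gate (h : IsContractiveDriving μ ℱ V d σ) [CompleteSpace X] {S : ℕ → Set Ω}
    (hS : ∀ i, MeasurableSet[ℱ i] (S i)) [∀ i, DecidablePred (· ∈ S i)] :
    IsContractiveDriving μ ℱ
      (fun i ω => if ω ∈ S i then V i ω else ContinuousLinearMap.id ℝ X)
      (fun i => (S i).indicator (d i)) σ where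
  norm_le_one i ω := by
    split_ifs
    · exact h.norm_le_one i ω
    · exact ContinuousLinearMap.norm_id_le
  predictable i x := by
    have : (fun ω => (if ω ∈ S i then V i ω else ContinuousLinearMap.id ℝ X) x) =
        (S i).piecewise (fun ω => V i ω x) fun _ => x := by
      ext ω; by_cases hω : ω ∈ S i <;> simp [hω]
    rw [this]
    exact (h.predictable i x).piecewise (hS i) stronglyMeasurable_const
  adapted i := (h.adapted i).indicator (ℱ.mono i.le_succ _ (hS i))
  memLp i := (h.memLp i).indicator (ℱ.le i _ (hS i))
  condExp_eq_zero i := by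
    filter_upwards [condExp_indicator (h.integrable i) (hS i), h.condExp_eq_zero i] with ω h1 h2
    rw [h1]
    by_cases hω : ω ∈ S i <;> simp [hω, h2]
  nonneg := h.nonneg
  predictable_bound := h.predictable_bound
  integrable_bound := h.integrable_bound
  condExp_sq_le i := by
    have he : (fun ω => ‖(S i).indicator (d i) ω‖ ^ 2) =
        (S i).indicator fun ω => ‖d i ω‖ ^ 2 := by
      ext ω; by_cases hω : ω ∈ S i <;> simp [hω]
    rw [he]
    filter_upwards [condExp_indicator (h.integrable_sq_norm i) (hS i), h.condExp_sq_le i]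
      with ω h1 h2
    rw [h1]
    by_cases hω : ω ∈ S i <;> simp [hω, h2, h.nonneg i ω]

lemma integral_discountedPotential_le [CompleteSpace X] (h : IsContractiveDriving μ ℱ V d σ)
    {D : ℝ} (hD : 1 ≤ D)
    (hsmooth : ∀ x y : X, ‖x + y‖ ^ 2 + ‖x - y‖ ^ 2 ≤ 2 * ‖x‖ ^ 2 + 2 * D ^ 2 * ‖y‖ ^ 2)
    {A : ℕ → Set Ω} (hA : ∀ i, MeasurableSet[ℱ i] (A i)) (hAmono : Monotone A)
    (hdA : ∀ i ω, ω ∉ A i → d i ω = 0) (j : ℕ) :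
    Integrable (discountedPotential V d σ D A j) μ ∧
      ∫ ω, discountedPotential V d σ D A j ω ∂μ ≤ Real.exp 1 * μ.real (A j) := by
  have hmeas := fun j => h.stronglyMeasurable_affineRecursion j
  have hσm (k j : ℕ) (hkj : k ≤ j + 1) :
      StronglyMeasurable[ℱ j] fun ω => Real.exp (-(4 * D ^ 2 * ∑ i ∈ Finset.range k, σ i ω)) := by
    have h1 : StronglyMeasurable[ℱ j] fun ω => ∑ i ∈ Finset.range k, σ i ω :=
      Finset.stronglyMeasurable_fun_sum _ fun i hi => (h.predictable_bound i).mono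
        (ℱ.mono (by have := Finset.mem_range.1 hi; omega))
    exact Real.continuous_exp.comp_stronglyMeasurable (h1.const_mul _).neg
  have hS (j : ℕ) : MeasurableSet[ℱ j] (A j ∩ smallJumps d j) := by
    refine (hA j).inter ?_
    have : smallJumps d j = ⋂ i ∈ Finset.range j, {ω | ‖d i ω‖ ≤ 1} := by
      ext ω; simp [smallJumps]
    rw [this]
    refine Finset.measurableSet_biInter _ fun i hi => ?_
    exact StronglyMeasurable.measurableSet_le
      ((h.adapted i).mono (ℱ.mono (Finset.mem_range.1 hi))).norm stronglyMeasurable_const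
  have hexp (k : ℕ) (ω : Ω) :
      Real.exp (-(4 * D ^ 2 * ∑ i ∈ Finset.range k, σ i ω)) ≤ 1 := by
    have := Finset.sum_nonneg fun i (_ : i ∈ Finset.range k) => h.nonneg i ω
    exact Real.exp_le_one_iff.2 (by simp only [Left.neg_nonpos_iff]; positivity)
  have hbound (j : ℕ) (ω : Ω) (hω : ω ∈ smallJumps d j) :
      smoothExpNorm (affineRecursion V d j ω) ≤ Real.exp (1 + j) := by
    refine (smoothExpNorm_le_exp _).trans (Real.exp_le_exp.2 ?_)
    have h1 := norm_affineRecursion_le h.norm_le_one d j ω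
    have h2 : ∑ i ∈ Finset.range j, ‖d i ω‖ ≤ ∑ i ∈ Finset.range j, (1 : ℝ) :=
      Finset.sum_le_sum fun i hi => hω i (Finset.mem_range.1 hi)
    simp only [Finset.sum_const, Finset.card_range, nsmul_eq_mul, mul_one] at h2
    linarith
  have hint (j : ℕ) : Integrable (discountedPotential V d σ D A j) μ := by
    refine Integrable.of_bound (C := Real.exp (1 + j)) (((StronglyMeasurable.indicator
      ((continuous_smoothExpNorm.comp_stronglyMeasurable (hmeas j)).mul
        (hσm j j (by omega))) (hS j)).mono (ℱ.le j)).aestronglyMeasurable)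
      (.of_forall fun ω => ?_)
    rw [discountedPotential, Set.indicator]
    split_ifs with hω
    · rw [Real.norm_of_nonneg (mul_nonneg (smoothExpNorm_pos _).le (Real.exp_pos _).le)]
      exact (mul_le_of_le_one_right (smoothExpNorm_pos _).le (hexp _ _)).trans (hbound j ω hω.2)
    · simp [Real.exp_nonneg]
  refine ⟨hint j, ?_⟩
  induction j with
  | zero =>
    have : ∀ ω, discountedPotential V d σ D A 0 ω = (A 0).indicator (fun _ => Real.exp 1) ω := by
      intro ω
      simp [discountedPotential, smallJumps, affineRecursion, smoothExpNorm_zero]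
    simp only [this]
    rw [integral_indicator_const _ (ℱ.le 0 _ (hA 0)), smul_eq_mul, mul_comm]
  | succ j ih =>
    set f : Ω → X := fun ω => V j ω (affineRecursion V d j ω) with hf
    have hfm : StronglyMeasurable[ℱ j] f :=
      stronglyMeasurable_clm_apply (h.predictable j) (hmeas j)
    have hfle (ω : Ω) : ‖f ω‖ ≤ ‖affineRecursion V d j ω‖ :=
      norm_clm_apply_le (h.norm_le_one j ω) _
    have hfi : Integrable f μ :=
      (h.integrable_affineRecursion j).mono (hfm.mono (ℱ.le j)).aestronglyMeasurable
        (.of_forall hfle)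
    set w : Ω → ℝ := (A j ∩ smallJumps d j).indicator fun ω => smoothExpNorm (f ω) *
      Real.exp (-(4 * D ^ 2 * ∑ i ∈ Finset.range (j + 1), σ i ω)) with hw
    have hwm : StronglyMeasurable[ℱ j] w :=
      StronglyMeasurable.indicator ((continuous_smoothExpNorm.comp_stronglyMeasurable hfm).mul
        (hσm (j + 1) j le_rfl)) (hS j)
    have hw0 (ω : Ω) : 0 ≤ w ω := Set.indicator_nonneg
      (fun ω _ => mul_nonneg (smoothExpNorm_pos _).le (Real.exp_pos _).le) ω
    have hwC (ω : Ω) : w ω ≤ Real.exp (1 + j) := by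
      rw [hw, Set.indicator]
      split_ifs with hω
      · exact (mul_le_of_le_one_right (smoothExpNorm_pos _).le (hexp _ _)).trans
          ((smoothExpNorm_mono (hfle ω)).trans (hbound j ω hω.2))
      · exact (Real.exp_pos _).le
    have hwb : ∀ᵐ ω ∂μ, ‖w ω‖ ≤ Real.exp (1 + j) := .of_forall fun ω => by
      rw [Real.norm_of_nonneg (hw0 ω)]; exact hwC ω
    have hwae := (hwm.mono (ℱ.le j)).aestronglyMeasurable (μ := μ)
    have hwi : Integrable w μ := .of_bound hwae _ hwb
    set v : Ω → ℝ := fun ω => w ω * smoothNormSlope (f ω) with hv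
    have hvm : StronglyMeasurable[ℱ j] v :=
      hwm.mul (continuous_smoothNormSlope.comp_stronglyMeasurable hfm)
    have hv0 (ω : Ω) : 0 ≤ v ω := mul_nonneg (hw0 ω) (smoothNormSlope_nonneg _)
    have hvC (ω : Ω) : v ω ≤ Real.exp (1 + j) :=
      (mul_le_of_le_one_right (hw0 ω) (smoothNormSlope_le_one _)).trans (hwC ω)
    have hvb : ∀ᵐ ω ∂μ, ‖v ω‖ ≤ Real.exp (1 + j) := .of_forall fun ω => by
      rw [Real.norm_of_nonneg (hv0 ω)]; exact hvC ω
    have hgi : Integrable (fun ω => ‖f ω‖ - ‖f ω - d j ω‖) μ :=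
      hfi.norm.sub (hfi.sub (h.integrable j)).norm
    have hvg : ∫ ω, v ω * (‖f ω‖ - ‖f ω - d j ω‖) ∂μ ≤ 0 := by
      refine (integral_mul_le_of_condExp_le (ℱ.le j) hvm hv0 hvC hgi (integrable_zero _ _ μ)
        (condExp_norm_sub_norm_sub_le_zero (ℱ.le j) hfm hfi (h.integrable j)
          (h.condExp_eq_zero j))).trans ?_
      simp
    have hwd : ∫ ω, w ω * ‖d j ω‖ ^ 2 ∂μ ≤ ∫ ω, w ω * σ j ω ∂μ :=
      integral_mul_le_of_condExp_le (ℱ.le j) hwm hw0 hwC (h.integrable_sq_norm j)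
        (h.integrable_bound j) (h.condExp_sq_le j)
    have hwdi : Integrable (fun ω => w ω * ‖d j ω‖ ^ 2) μ :=
      (h.integrable_sq_norm j).bdd_mul hwae hwb
    have hwσi : Integrable (fun ω => w ω * σ j ω) μ :=
      (h.integrable_bound j).bdd_mul hwae hwb
    have hvgi : Integrable (fun ω => v ω * (‖f ω‖ - ‖f ω - d j ω‖)) μ :=
      hgi.bdd_mul (hvm.mono (ℱ.le j)).aestronglyMeasurable hvb
    have hwadd : Integrable (fun ω => w ω + 4 * D ^ 2 * (w ω * ‖d j ω‖ ^ 2)) μ :=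
      hwi.add (hwdi.const_mul _)
    have hwvadd : Integrable (fun ω => w ω + 4 * D ^ 2 * (w ω * ‖d j ω‖ ^ 2) +
        v ω * (‖f ω‖ - ‖f ω - d j ω‖)) μ := hwadd.add hvgi
    have hdm : MeasurableSet (A (j + 1) \ A j) :=
      (ℱ.le _ _ (hA (j + 1))).diff (ℱ.le _ _ (hA j))
    have hpt (ω : Ω) : discountedPotential V d σ D A (j + 1) ω ≤
        w ω + 4 * D ^ 2 * (w ω * ‖d j ω‖ ^ 2) + v ω * (‖f ω‖ - ‖f ω - d j ω‖) +
          (A (j + 1) \ A j).indicator (fun _ => Real.exp 1) ω := by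
      have htr := smoothExpNorm_truncated_add_le hD hsmooth (f ω) (d j ω)
      have hwe : w ω + 4 * D ^ 2 * (w ω * ‖d j ω‖ ^ 2) + v ω * (‖f ω‖ - ‖f ω - d j ω‖) =
          w ω * (1 + 4 * D ^ 2 * ‖d j ω‖ ^ 2 -
            smoothNormSlope (f ω) * (‖f ω - d j ω‖ - ‖f ω‖)) := by
        rw [hv]; ring
      rw [hwe]
      by_cases hω : ω ∈ A (j + 1) ∩ smallJumps d (j + 1)
      · have hsmall : ω ∈ smallJumps d j := fun i hi => hω.2 i (hi.trans j.lt_succ_self)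
        have hdj : ‖d j ω‖ ≤ 1 := hω.2 j j.lt_succ_self
        rw [discountedPotential, Set.indicator_of_mem hω]
        by_cases hAj : ω ∈ A j
        · rw [if_pos hdj] at htr
          rw [Set.indicator_of_notMem (fun h' => h'.2 hAj), add_zero, hw,
            Set.indicator_of_mem (show ω ∈ A j ∩ smallJumps d j from ⟨hAj, hsmall⟩), mul_right_comm (smoothExpNorm _)]
          exact mul_le_mul_of_nonneg_right htr (Real.exp_pos _).le
        · rw [Set.indicator_of_mem (show ω ∈ A (j + 1) \ A j from ⟨hω.1, hAj⟩), hw,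
            Set.indicator_of_notMem (fun h' => hAj h'.1), zero_mul, zero_add,
            affineRecursion_eq_zero hAmono hdA hAj, smoothExpNorm_zero]
          exact mul_le_of_le_one_right (Real.exp_pos _).le (hexp _ _)
      · rw [discountedPotential, Set.indicator_of_notMem hω]
        refine add_nonneg (mul_nonneg (hw0 ω) ?_)
          (Set.indicator_nonneg (fun _ _ => (Real.exp_pos _).le) _)
        refine nonneg_of_mul_nonneg_right (le_trans ?_ htr) (smoothExpNorm_pos (f ω))
        split_ifs
        exacts [(smoothExpNorm_pos _).le, le_rfl]
    have hwZ (ω : Ω) : w ω + 4 * D ^ 2 * (w ω * σ j ω) ≤ discountedPotential V d σ D A j ω := by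
      rw [hw, discountedPotential]
      by_cases hω : ω ∈ A j ∩ smallJumps d j
      · rw [Set.indicator_of_mem hω, Set.indicator_of_mem hω, Finset.sum_range_succ, mul_add,
          neg_add, Real.exp_add]
        have h1 : Real.exp (-(4 * D ^ 2 * σ j ω)) * (1 + 4 * D ^ 2 * σ j ω) ≤ 1 := by
          rw [Real.exp_neg, inv_mul_le_one₀ (Real.exp_pos _), add_comm]
          exact Real.add_one_le_exp _
        have h2 := smoothExpNorm_mono (hfle ω)
        have h3 : 0 ≤ smoothExpNorm (f ω) *
            Real.exp (-(4 * D ^ 2 * ∑ i ∈ Finset.range j, σ i ω)) :=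
          mul_nonneg (smoothExpNorm_pos _).le (Real.exp_pos _).le
        calc _ = smoothExpNorm (f ω) *
              Real.exp (-(4 * D ^ 2 * ∑ i ∈ Finset.range j, σ i ω)) *
              (Real.exp (-(4 * D ^ 2 * σ j ω)) * (1 + 4 * D ^ 2 * σ j ω)) := by ring
          _ ≤ smoothExpNorm (f ω) *
              Real.exp (-(4 * D ^ 2 * ∑ i ∈ Finset.range j, σ i ω)) :=
            mul_le_of_le_one_right h3 h1
          _ ≤ _ := by gcongr
      · rw [Set.indicator_of_notMem hω, Set.indicator_of_notMem hω]; simp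
    calc ∫ ω, discountedPotential V d σ D A (j + 1) ω ∂μ
        ≤ ∫ ω, (w ω + 4 * D ^ 2 * (w ω * ‖d j ω‖ ^ 2) + v ω * (‖f ω‖ - ‖f ω - d j ω‖) +
          (A (j + 1) \ A j).indicator (fun _ => Real.exp 1) ω) ∂μ :=
          integral_mono (hint _) (hwvadd.add
            ((integrable_const _).indicator hdm)) hpt
      _ = ∫ ω, w ω ∂μ + 4 * D ^ 2 * ∫ ω, w ω * ‖d j ω‖ ^ 2 ∂μ +
          ∫ ω, v ω * (‖f ω‖ - ‖f ω - d j ω‖) ∂μ + Real.exp 1 * μ.real (A (j + 1) \ A j) := by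
          rw [integral_add hwvadd
            ((integrable_const _).indicator hdm), integral_add hwadd hvgi,
            integral_add hwi (hwdi.const_mul _), integral_const_mul,
            integral_indicator_const _ hdm, smul_eq_mul, mul_comm (μ.real _)]
      _ ≤ ∫ ω, w ω ∂μ + 4 * D ^ 2 * ∫ ω, w ω * σ j ω ∂μ + 0 +
          Real.exp 1 * μ.real (A (j + 1) \ A j) := by gcongr
      _ = ∫ ω, (w ω + 4 * D ^ 2 * (w ω * σ j ω)) ∂μ +
          Real.exp 1 * μ.real (A (j + 1) \ A j) := by
          rw [add_zero, integral_add hwi (hwσi.const_mul _), integral_const_mul]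
      _ ≤ Real.exp 1 * μ.real (A j) + Real.exp 1 * μ.real (A (j + 1) \ A j) := by
          gcongr
          exact (integral_mono (hwi.add (hwσi.const_mul _)) (hint j) hwZ).trans ih
      _ = Real.exp 1 * μ.real (A (j + 1)) := by
          rw [← mul_add, measureReal_sdiff (hAmono j.le_succ) (ℱ.le _ _ (hA j))]
          ring

lemma measureReal_goodLambda_le [CompleteSpace X] (h : IsContractiveDriving μ ℱ V d σ)
    {D : ℝ} (hD : 1 ≤ D)
    (hsmooth : ∀ x y : X, ‖x + y‖ ^ 2 + ‖x - y‖ ^ 2 ≤ 2 * ‖x‖ ^ 2 + 2 * D ^ 2 * ‖y‖ ^ 2)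
    {R : ℝ} (hR : 0 ≤ R) (q : ℝ) (n : ℕ) :
    μ.real {ω | 2 * R < runningMax (affineRecursion V d) n ω ∧ (∀ i < n, ‖d i ω‖ ≤ 1) ∧
        ∑ i ∈ Finset.range n, σ i ω ≤ q} ≤
      Real.exp (2 - R + 4 * D ^ 2 * q) *
        μ.real {ω | R < runningMax (affineRecursion V d) n ω} := by
  classical
  set m := runningMax (affineRecursion V d) with hm
  have hmm (j : ℕ) : StronglyMeasurable[ℱ j] (m j) :=
    stronglyMeasurable_runningMax h.stronglyMeasurable_affineRecursion j
  have hA (i : ℕ) : MeasurableSet[ℱ i] {ω | R < m i ω} :=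
    StronglyMeasurable.measurableSet_lt stronglyMeasurable_const (hmm i)
  have hS (i : ℕ) : MeasurableSet[ℱ i] ({ω | R < m i ω} ∩ {ω | m i ω ≤ 2 * R}) :=
    (hA i).inter (StronglyMeasurable.measurableSet_le (hmm i) stronglyMeasurable_const)
  have hg := h.gate hS
  set V' : ℕ → Ω → X →L[ℝ] X := fun i ω =>
    if ω ∈ {ω | R < m i ω} ∩ {ω | m i ω ≤ 2 * R} then V i ω else ContinuousLinearMap.id ℝ X
    with hV'
  set d' : ℕ → Ω → X := fun i =>
    ({ω | R < m i ω} ∩ {ω | m i ω ≤ 2 * R}).indicator (d i) with hd'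
  have hAmono : Monotone fun i => {ω | R < m i ω} := fun i j hij ω hω =>
    lt_of_lt_of_le hω (runningMax_mono (affineRecursion V d) ω hij)
  have hdA (i : ℕ) (ω : Ω) (hω : ω ∉ {ω | R < m i ω}) : d' i ω = 0 :=
    Set.indicator_of_notMem (fun h' => hω h'.1) _
  obtain ⟨hint, hle⟩ := hg.integral_discountedPotential_le hD hsmooth hA hAmono hdA n
  set N := affineRecursion V' d' with hN
  have hin {j : ℕ} {ω : Ω} (h1 : R < m j ω) (h2 : m j ω ≤ 2 * R) :
      N (j + 1) ω = V j ω (N j ω) + d j ω := by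
    simp [hN, affineRecursion, hV', hd', h1, h2]
  have hout {j : ℕ} {ω : Ω} (h1 : ¬(R < m j ω ∧ m j ω ≤ 2 * R)) : N (j + 1) ω = N j ω := by
    simp [hN, affineRecursion, hV', hd', h1]
  have hinv (ω : Ω) (j : ℕ) (hj : ∀ i < j, ‖d i ω‖ ≤ 1) :
      (m j ω ≤ R → N j ω = 0) ∧
      (m j ω ≤ 2 * R → ‖affineRecursion V d j ω - N j ω‖ ≤ R + 1) ∧
      (2 * R < m j ω → R - 1 ≤ ‖N j ω‖) := by
    induction j with
    | zero =>
      have h0 : m 0 ω = 0 := by simp [hm, runningMax, affineRecursion]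
      refine ⟨fun _ => rfl, fun _ => ?_, fun hlt => ?_⟩
      · simp only [hN, affineRecursion, Pi.zero_apply, sub_zero, norm_zero]; linarith
      · rw [h0] at hlt; linarith
    | succ j ih =>
      obtain ⟨ih1, ih2, ih3⟩ := ih fun i hi => hj i (hi.trans j.lt_succ_self)
      have hdj := hj j j.lt_succ_self
      have hsucc : m (j + 1) ω = max (m j ω) ‖affineRecursion V d (j + 1) ω‖ := rfl
      have hrec : affineRecursion V d (j + 1) ω = V j ω (affineRecursion V d j ω) + d j ω := rfl
      have hmj : m j ω ≤ m (j + 1) ω := le_max_left _ _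
      rcases le_or_gt (m j ω) R with hcase | hcase
      · have hz : N (j + 1) ω = 0 := by
          rw [hout (fun h' => not_lt.2 hcase h'.1), ih1 hcase]
        have hb : ‖affineRecursion V d (j + 1) ω‖ ≤ R + 1 := by
          rw [hrec]
          refine (norm_add_le _ _).trans (add_le_add ?_ hdj)
          exact (norm_clm_apply_le (h.norm_le_one j ω) _).trans
            ((le_runningMax (affineRecursion V d) le_rfl ω).trans hcase)
        refine ⟨fun _ => hz, fun _ => by simpa [hz] using hb, fun hlt => ?_⟩
        rw [hsucc, lt_max_iff] at hlt
        rw [hz, norm_zero]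
        rcases hlt with hlt | hlt <;> linarith
      · rcases le_or_gt (m j ω) (2 * R) with hcase2 | hcase2
        · have hb : ‖affineRecursion V d (j + 1) ω - N (j + 1) ω‖ ≤ R + 1 := by
            rw [hrec, hin hcase hcase2, add_sub_add_right_eq_sub, ← map_sub]
            exact (norm_clm_apply_le (h.norm_le_one j ω) _).trans (ih2 hcase2)
          refine ⟨fun h' => by linarith, fun _ => hb, fun hlt => ?_⟩
          rw [hsucc, lt_max_iff] at hlt
          have := norm_sub_norm_le (affineRecursion V d (j + 1) ω) (N (j + 1) ω)
          rcases hlt with hlt | hlt <;> linarith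
        · refine ⟨fun h' => by linarith, fun h' => by linarith, fun _ => ?_⟩
          rw [hout (fun h' => not_le.2 hcase2 h'.2)]
          exact ih3 hcase2
  have hmarkov := mul_meas_ge_le_integral_of_nonneg (μ := μ) (.of_forall fun ω => ?_) hint
    (Real.exp (R - 1 - 4 * D ^ 2 * q))
  · have hsub : {ω | 2 * R < m n ω ∧ (∀ i < n, ‖d i ω‖ ≤ 1) ∧
        ∑ i ∈ Finset.range n, σ i ω ≤ q} ⊆
        {ω | Real.exp (R - 1 - 4 * D ^ 2 * q) ≤
          discountedPotential V' d' σ D (fun i => {ω | R < m i ω}) n ω} := by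
      rintro ω ⟨h1, h2, h3⟩
      have hmem : ω ∈ {ω | R < m n ω} ∩ smallJumps d' n :=
        ⟨show R < m n ω by linarith, fun i hi =>
          (norm_indicator_le_norm_self _ _).trans (h2 i hi)⟩
      rw [Set.mem_ofPred_eq, discountedPotential, Set.indicator_of_mem hmem, sub_eq_add_neg,
        Real.exp_add]
      have h4 := (hinv ω n h2).2.2 h1
      have h5 := exp_norm_le_smoothExpNorm (N n ω)
      refine mul_le_mul ((Real.exp_le_exp.2 h4).trans h5) ?_ (Real.exp_pos _).le
        (smoothExpNorm_pos _).le
      gcongr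
    have h6 := measureReal_mono (μ := μ) hsub
    have h7 := mul_le_mul_of_nonneg_left h6 (Real.exp_pos (R - 1 - 4 * D ^ 2 * q)).le
    have h8 := (h7.trans hmarkov).trans hle
    have h9 : Real.exp (2 - R + 4 * D ^ 2 * q) =
        Real.exp 1 / Real.exp (R - 1 - 4 * D ^ 2 * q) := by
      rw [← Real.exp_sub]; congr 1; ring
    rw [h9, div_mul_eq_mul_div, le_div_iff₀ (Real.exp_pos _), mul_comm]
    exact h8
  · exact Set.indicator_nonneg
      (fun _ _ => mul_nonneg (smoothExpNorm_pos _).le (Real.exp_pos _).le) ω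

end IsContractiveDriving

lemma affineRecursion_smul (V : ℕ → Ω → X →L[ℝ] X) (d : ℕ → Ω → X) (θ : ℝ) (j : ℕ) (ω : Ω) :
    affineRecursion V (fun i => θ • d i) j ω = θ • affineRecursion V d j ω := by
  induction j with
  | zero => simp [affineRecursion]
  | succ j ih => simp [affineRecursion, ih]

lemma runningMax_affineRecursion_smul (V : ℕ → Ω → X →L[ℝ] X) (d : ℕ → Ω → X) {θ : ℝ}
    (hθ : 0 ≤ θ) (j : ℕ) (ω : Ω) :
    runningMax (affineRecursion V fun i => θ • d i) j ω =
      θ * runningMax (affineRecursion V d) j ω := by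
  induction j with
  | zero => simp [runningMax, affineRecursion_smul, norm_smul, abs_of_nonneg hθ]
  | succ j ih =>
    simp only [runningMax, ih, affineRecursion_smul, norm_smul, Real.norm_of_nonneg hθ,
      mul_max_of_nonneg _ _ hθ]

lemma IsContractiveDriving.measureReal_two_mul_lt_runningMax_le [CompleteSpace X]
    {m0 : MeasurableSpace Ω} {μ : Measure Ω} [IsProbabilityMeasure μ] {ℱ : Filtration ℕ m0}
    {V : ℕ → Ω → X →L[ℝ] X} {d : ℕ → Ω → X} {σ : ℕ → Ω → ℝ}
    (h : IsContractiveDriving μ ℱ V d σ) {D : ℝ} (hD : 1 ≤ D)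
    (hsmooth : ∀ x y : X, ‖x + y‖ ^ 2 + ‖x - y‖ ^ 2 ≤ 2 * ‖x‖ ^ 2 + 2 * D ^ 2 * ‖y‖ ^ 2)
    {p : ℝ} (hp : 2 ≤ p) {t : ℝ} (ht : 0 < t) (n : ℕ) :
    μ.real {ω | 2 * t < runningMax (affineRecursion V d) n ω ∧
        (∀ i < n, 10 * p * ‖d i ω‖ ≤ t) ∧
        40 / 3 * D * √p * √(∑ i ∈ Finset.range n, σ i ω) ≤ t} ≤
      Real.exp (2 - 31 / 4 * p) *
        μ.real {ω | t < runningMax (affineRecursion V d) n ω} := by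
  have hθ : 0 < 10 * p / t := by positivity
  have hgl := (h.smul (10 * p / t)).measureReal_goodLambda_le hD hsmooth
    (R := 10 * p) (by positivity) (9 * p / (16 * D ^ 2)) n
  have hset : {ω | 10 * p < runningMax (affineRecursion V fun i => (10 * p / t) • d i) n ω} =
      {ω | t < runningMax (affineRecursion V d) n ω} := by
    ext ω
    simp only [Set.mem_ofPred_eq, runningMax_affineRecursion_smul V d hθ.le]
    rw [div_mul_eq_mul_div, lt_div_iff₀ ht, mul_lt_mul_iff_right₀ (by positivity)]
  have hexp : 2 - 10 * p + 4 * D ^ 2 * (9 * p / (16 * D ^ 2)) = 2 - 31 / 4 * p := by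
    field_simp; ring
  rw [hset, hexp] at hgl
  refine (measureReal_mono ?_).trans hgl
  rintro ω ⟨h1, h2, h3⟩
  refine ⟨?_, fun i hi => ?_, ?_⟩
  · rw [runningMax_affineRecursion_smul V d hθ.le, div_mul_eq_mul_div, lt_div_iff₀ ht]
    nlinarith
  · rw [Pi.smul_apply, norm_smul, Real.norm_of_nonneg hθ.le, div_mul_eq_mul_div, div_le_one ht]
    exact h2 i hi
  · have hnn := Finset.sum_nonneg fun i (_ : i ∈ Finset.range n) => h.nonneg i ω
    rw [← Finset.mul_sum]
    have hs := Real.sq_sqrt hnn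
    have hsp := Real.sq_sqrt (show 0 ≤ p by positivity)
    have hsq : (40 / 3 * D * √p * √(∑ i ∈ Finset.range n, σ i ω)) ^ 2 ≤ t ^ 2 := by
      gcongr
    rw [mul_pow, mul_pow, mul_pow, hs, hsp] at hsq
    rw [div_pow, div_mul_eq_mul_div, div_le_div_iff₀ (by positivity) (by positivity)]
    nlinarith

end Recursion

section Integration

lemma eLpNorm_ofReal_eq_lintegral {Ω : Type*} {m0 : MeasurableSpace Ω} {μ : Measure Ω}
    {f : Ω → ℝ} (hf : ∀ ω, 0 ≤ f ω) {p : ℝ} (hp : 0 < p) :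
    eLpNorm f (ENNReal.ofReal p) μ = (∫⁻ ω, ENNReal.ofReal (f ω ^ p) ∂μ) ^ (1 / p) := by
  rw [eLpNorm_eq_lintegral_rpow_enorm_toReal (by simpa using hp) ENNReal.ofReal_ne_top,
    ENNReal.toReal_ofReal hp.le]
  congr 2
  ext ω
  rw [Real.enorm_of_nonneg (hf ω), ENNReal.ofReal_rpow_of_nonneg (hf ω) hp.le]

lemma eLpNorm_le_of_goodLambda {Ω : Type*} {m0 : MeasurableSpace Ω} {μ : Measure Ω}
    {f g : Ω → ℝ} (hf0 : ∀ ω, 0 ≤ f ω) (hg0 : ∀ ω, 0 ≤ g ω) (hfm : AEMeasurable f μ)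
    (hgm : AEMeasurable g μ) {p ε : ℝ} (hp : 0 < p) (hε : 0 ≤ ε)
    (hεp : ε + (3⁻¹ : ℝ) ^ p ≤ 2⁻¹ ^ p) (hfin : eLpNorm f (ENNReal.ofReal p) μ ≠ ⊤)
    (hgood : ∀ t > 0, μ {ω | 2 * t < f ω} ≤
      ENNReal.ofReal ε * μ {ω | t < f ω} + μ {ω | t < g ω}) :
    eLpNorm f (ENNReal.ofReal p) μ ≤ eLpNorm (fun ω => 3 * g ω) (ENNReal.ofReal p) μ := by
  have hscale (c : ℝ) (hc : 0 ≤ c) (k : Ω → ℝ) (hk : ∀ ω, 0 ≤ k ω) :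
      ∫⁻ ω, ENNReal.ofReal ((c * k ω) ^ p) ∂μ =
        ENNReal.ofReal (c ^ p) * ∫⁻ ω, ENNReal.ofReal (k ω ^ p) ∂μ := by
    rw [← lintegral_const_mul' _ _ ENNReal.ofReal_ne_top]
    refine lintegral_congr fun ω => ?_
    rw [Real.mul_rpow hc (hk ω), ENNReal.ofReal_mul (by positivity)]
  have hI : ∫⁻ ω, ENNReal.ofReal (f ω ^ p) ∂μ ≠ ⊤ := by
    intro htop
    rw [eLpNorm_ofReal_eq_lintegral hf0 hp, htop] at hfin
    exact hfin (ENNReal.top_rpow_of_pos (by positivity))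
  have hmain : ENNReal.ofReal (2⁻¹ ^ p) * ∫⁻ ω, ENNReal.ofReal (f ω ^ p) ∂μ ≤
      ENNReal.ofReal ε * ∫⁻ ω, ENNReal.ofReal (f ω ^ p) ∂μ +
        ∫⁻ ω, ENNReal.ofReal (g ω ^ p) ∂μ := by
    rw [← hscale 2⁻¹ (by norm_num) f hf0,
      lintegral_rpow_eq_lintegral_meas_lt_mul μ
        (.of_forall fun ω => mul_nonneg (by norm_num) (hf0 ω)) (hfm.const_mul _) hp,
      lintegral_rpow_eq_lintegral_meas_lt_mul μ (.of_forall hf0) hfm hp,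
      lintegral_rpow_eq_lintegral_meas_lt_mul μ (.of_forall hg0) hgm hp, mul_left_comm,
      ← mul_add, ← lintegral_const_mul' (ENNReal.ofReal ε) _ ENNReal.ofReal_ne_top]
    refine mul_le_mul' le_rfl ?_
    rw [← lintegral_add_right]
    · refine setLIntegral_mono' measurableSet_Ioi fun t ht => ?_
      rw [← mul_assoc, ← add_mul]
      refine mul_le_mul' ?_ le_rfl
      refine le_trans (measure_mono fun ω hω => ?_) (hgood t ht)
      have hω' : t < 2⁻¹ * f ω := hω
      change 2 * t < f ω
      linarith
    · refine Measurable.mul (Antitone.measurable fun s t hst => measure_mono fun ω hω => ?_)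
        (by fun_prop)
      exact lt_of_le_of_lt hst hω
  have hcancel : ENNReal.ofReal (3⁻¹ ^ p) * ∫⁻ ω, ENNReal.ofReal (f ω ^ p) ∂μ ≤
      ∫⁻ ω, ENNReal.ofReal (g ω ^ p) ∂μ := by
    have h1 : ENNReal.ofReal ε + ENNReal.ofReal (3⁻¹ ^ p) ≤ ENNReal.ofReal (2⁻¹ ^ p) := by
      rw [← ENNReal.ofReal_add hε (by positivity)]
      exact ENNReal.ofReal_le_ofReal hεp
    refine (ENNReal.add_le_add_iff_left
      (ENNReal.mul_ne_top (ENNReal.ofReal_ne_top (r := ε)) hI)).1 (le_trans ?_ hmain)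
    rw [← add_mul]
    exact mul_le_mul' h1 le_rfl
  rw [eLpNorm_ofReal_eq_lintegral hf0 hp,
    eLpNorm_ofReal_eq_lintegral (fun ω => mul_nonneg zero_le_three (hg0 ω)) hp]
  refine ENNReal.rpow_le_rpow ?_ (by positivity)
  rw [hscale 3 zero_le_three g hg0]
  refine le_trans (le_of_eq ?_) (mul_le_mul' le_rfl hcancel)
  rw [← mul_assoc, ← ENNReal.ofReal_mul (by positivity),
    ← Real.mul_rpow (by norm_num) (by norm_num)]
  norm_num

lemma exp_add_three_inv_rpow_le {p : ℝ} (hp : 2 ≤ p) :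
    Real.exp (2 - 31 / 4 * p) + (3⁻¹ : ℝ) ^ p ≤ 2⁻¹ ^ p := by
  have h2 : (0 : ℝ) < 2⁻¹ ^ p := by positivity
  have h3 : (3⁻¹ : ℝ) ^ p = 2⁻¹ ^ p * (2 / 3) ^ p := by
    rw [← Real.mul_rpow (by norm_num) (by norm_num)]; norm_num
  have h4 : (2 / 3 : ℝ) ^ p ≤ 1 / 2 := by
    refine (Real.rpow_le_rpow_of_exponent_ge (by norm_num) (by norm_num) hp).trans ?_
    norm_num
  have h5 : Real.exp (-p) ≤ (2⁻¹ : ℝ) ^ p := by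
    rw [show -p = -1 * p by ring, Real.exp_mul]
    refine Real.rpow_le_rpow (Real.exp_pos _).le ?_ (by linarith)
    rw [Real.exp_neg]
    exact inv_anti₀ two_pos (by linarith [Real.add_one_le_exp (1 : ℝ)])
  have h6 : Real.exp (2 - 31 / 4 * p) ≤ Real.exp (-p) * (1 / 2) := by
    have h7 : Real.exp (-1) ≤ 1 / 2 := by
      rw [Real.exp_neg, one_div]
      exact inv_anti₀ two_pos (by linarith [Real.add_one_le_exp (1 : ℝ)])
    calc Real.exp (2 - 31 / 4 * p) ≤ Real.exp (-p + -1) :=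
          Real.exp_le_exp.2 (by linarith)
      _ = Real.exp (-p) * Real.exp (-1) := Real.exp_add _ _
      _ ≤ _ := by gcongr
  rw [h3]
  nlinarith

end Integration

lemma IsContractiveDriving.eLpNorm_runningMax_le {Ω X : Type*} [NormedAddCommGroup X]
    [NormedSpace ℝ X] [CompleteSpace X] {m0 : MeasurableSpace Ω} {μ : Measure Ω}
    [IsProbabilityMeasure μ] {ℱ : Filtration ℕ m0} {V : ℕ → Ω → X →L[ℝ] X} {d : ℕ → Ω → X}
    {σ : ℕ → Ω → ℝ} (h : IsContractiveDriving μ ℱ V d σ) {D : ℝ} (hD : 1 ≤ D)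
    (hsmooth : ∀ x y : X, ‖x + y‖ ^ 2 + ‖x - y‖ ^ 2 ≤ 2 * ‖x‖ ^ 2 + 2 * D ^ 2 * ‖y‖ ^ 2)
    {p : ℝ} (hp : 2 ≤ p) (n : ℕ) {dmax : Ω → ℝ} (hdmax : MemLp dmax (ENNReal.ofReal p) μ)
    (hdmax0 : ∀ ω, 0 ≤ dmax ω) (hle : ∀ i < n, ∀ ω, ‖d i ω‖ ≤ dmax ω) :
    eLpNorm (runningMax (affineRecursion V d) n) (ENNReal.ofReal p) μ ≤
      ENNReal.ofReal (30 * p) * eLpNorm dmax (ENNReal.ofReal p) μ +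
        ENNReal.ofReal (40 * D * √p) *
          eLpNorm (fun ω => √(∑ i ∈ Finset.range n, σ i ω)) (ENNReal.ofReal p) μ := by
  have hp1 : 1 ≤ ENNReal.ofReal p := by
    rw [← ENNReal.ofReal_one]; exact ENNReal.ofReal_le_ofReal (by linarith)
  have hmax0 (ω : Ω) := runningMax_nonneg (affineRecursion V d) n ω
  have hmaxm : StronglyMeasurable (runningMax (affineRecursion V d) n) :=
    (stronglyMeasurable_runningMax h.stronglyMeasurable_affineRecursion n).mono (ℱ.le n)
  set s : Ω → ℝ := fun ω => √(∑ i ∈ Finset.range n, σ i ω) with hs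
  have hsm : StronglyMeasurable s :=
    Real.continuous_sqrt.comp_stronglyMeasurable (Finset.stronglyMeasurable_fun_sum _
      fun i _ => (h.predictable_bound i).mono (ℱ.le i))
  have hfin : eLpNorm (runningMax (affineRecursion V d) n) (ENNReal.ofReal p) μ ≠ ⊤ := by
    refine ((hdmax.const_mul (n : ℝ)).mono hmaxm.aestronglyMeasurable
      (.of_forall fun ω => ?_)).eLpNorm_ne_top
    rw [Real.norm_of_nonneg (hmax0 ω),
      Real.norm_of_nonneg (mul_nonneg n.cast_nonneg (hdmax0 ω))]
    refine runningMax_le _ fun j hj => (norm_affineRecursion_le h.norm_le_one d j ω).trans ?_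
    calc ∑ i ∈ Finset.range j, ‖d i ω‖ ≤ ∑ i ∈ Finset.range j, dmax ω :=
          Finset.sum_le_sum fun i hi => hle i ((Finset.mem_range.1 hi).trans_le hj) ω
      _ = j * dmax ω := by simp
      _ ≤ n * dmax ω := by gcongr; exact hdmax0 ω
  have hD0 : 0 ≤ D := by linarith
  have hp0 : 0 < p := by linarith
  have hkey := eLpNorm_le_of_goodLambda (μ := μ) hmax0
    (g := fun ω => 10 * p * dmax ω + 40 / 3 * D * √p * s ω)
    (fun ω => add_nonneg (mul_nonneg (by positivity) (hdmax0 ω)) (by positivity))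
    hmaxm.measurable.aemeasurable
    ((hdmax.aestronglyMeasurable.aemeasurable.const_mul _).add
      (hsm.measurable.aemeasurable.const_mul _)) hp0 (Real.exp_pos _).le
    (exp_add_three_inv_rpow_le hp) hfin fun t ht => ?_
  · refine hkey.trans ?_
    have hsplit : (fun ω => 3 * (10 * p * dmax ω + 40 / 3 * D * √p * s ω)) =
        (30 * p) • dmax + (40 * D * √p) • s := by
      ext ω; simp only [Pi.add_apply, Pi.smul_apply, smul_eq_mul]; ring
    rw [hsplit]
    refine (eLpNorm_add_le (hdmax.aestronglyMeasurable.const_smul _)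
      (hsm.aestronglyMeasurable.const_smul _) hp1).trans ?_
    rw [eLpNorm_const_smul, eLpNorm_const_smul, Real.enorm_of_nonneg (by positivity),
      Real.enorm_of_nonneg (by positivity)]
  · have hgl := h.measureReal_two_mul_lt_runningMax_le hD hsmooth hp ht n
    set E := {ω | 2 * t < runningMax (affineRecursion V d) n ω ∧
        (∀ i < n, 10 * p * ‖d i ω‖ ≤ t) ∧
        40 / 3 * D * √p * √(∑ i ∈ Finset.range n, σ i ω) ≤ t} with hE
    have hgl' : μ E ≤ ENNReal.ofReal (Real.exp (2 - 31 / 4 * p)) *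
        μ {ω | t < runningMax (affineRecursion V d) n ω} := by
      rw [← ofReal_measureReal (μ := μ) (s := E), ← ofReal_measureReal (μ := μ),
        ← ENNReal.ofReal_mul (Real.exp_pos _).le]
      exact ENNReal.ofReal_le_ofReal hgl
    refine le_trans (measure_mono ?_) ((measure_union_le E _).trans (add_le_add hgl' le_rfl))
    intro ω hω
    rcases lt_or_ge t (10 * p * dmax ω + 40 / 3 * D * √p * s ω) with hlt | hge
    · exact Or.inr hlt
    · have h1 : 0 ≤ 10 * p * dmax ω := mul_nonneg (by positivity) (hdmax0 ω)
      have h2 : 0 ≤ 40 / 3 * D * √p * s ω := by positivity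
      refine Or.inl ⟨hω, fun i hi => ?_, ?_⟩
      · have := mul_le_mul_of_nonneg_left (hle i hi ω) (show 0 ≤ 10 * p by positivity)
        linarith
      · change 40 / 3 * D * √p * s ω ≤ t
        linarith

lemma isContractiveDriving_of_condExp {Ω X : Type*} [NormedAddCommGroup X] [NormedSpace ℝ X]
    {m0 : MeasurableSpace Ω} {μ : Measure Ω} {ℱ : Filtration ℕ m0} {V : ℕ → Ω → X →L[ℝ] X}
    {d : ℕ → Ω → X} (hV : ∀ i ω, ‖V i ω‖ ≤ 1)
    (hVm : ∀ i x, StronglyMeasurable[ℱ i] fun ω => V i ω x)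
    (hdm : ∀ i, StronglyMeasurable[ℱ (i + 1)] (d i)) (hd : ∀ i, MemLp (d i) 2 μ)
    (hd0 : ∀ i, μ[d i | ℱ i] =ᵐ[μ] 0) :
    IsContractiveDriving μ ℱ V d fun i ω => max ((μ[fun ω => ‖d i ω‖ ^ 2 | ℱ i]) ω) 0 where
  norm_le_one := hV
  predictable := hVm
  adapted := hdm
  memLp := hd
  condExp_eq_zero := hd0
  nonneg _ _ := le_max_right _ _
  predictable_bound i :=
    @StronglyMeasurable.sup _ _ _ _ (ℱ i) _ _ _ stronglyMeasurable_condExp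
      stronglyMeasurable_const
  integrable_bound _ := integrable_condExp.pos_part
  condExp_sq_le _ := .of_forall fun _ => le_max_left _ _

/-- Pinelis-type Rosenthal–Burkholder inequality for perturbed martingale recursions
in (2,D)-smooth Banach spaces (general case). -/
theorem pinelis_rosenthal_burkholder
    {Ω : Type*} {m0 : MeasurableSpace Ω} {μ : Measure Ω} [IsProbabilityMeasure μ]
    {X : Type*} [NormedAddCommGroup X] [NormedSpace ℝ X] [CompleteSpace X]
    (D : ℝ) (hD : 1 ≤ D)
    (hsmooth : ∀ x y : X, ‖x + y‖^2 + ‖x - y‖^2 ≤ 2*‖x‖^2 + 2*D^2*‖y‖^2)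
    (p : ℝ) (hp : 2 ≤ p)
    (ℓ : ℕ) (ℱ : Filtration ℕ m0)
    (Mt M : ℕ → Ω → X) (V : ℕ → Ω → X →L[ℝ] X)
    -- (M̃_j)_{j=0}^ℓ is adapted
    (hMt_adapted : ∀ j ≤ ℓ, StronglyMeasurable[ℱ j] (Mt j))
    -- (M_j)_{j=0}^ℓ is a martingale with respect to (ℱ_j)
    (hM_adapted : ∀ j ≤ ℓ, StronglyMeasurable[ℱ j] (M j))
    (hM_int : ∀ j ≤ ℓ, Integrable (M j) μ)
    (hM_mart : ∀ i j, i ≤ j → j ≤ ℓ → μ[M j | ℱ i] =ᵐ[μ] M i)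
    -- (V_j)_{j=1}^ℓ is a strongly predictable sequence of random contractions
    (hV_contr : ∀ j ω, ‖V j ω‖ ≤ 1)
    (hV_pred : ∀ j, 1 ≤ j → j ≤ ℓ → ∀ x : X,
      StronglyMeasurable[ℱ (j-1)] (fun ω => V j ω x))
    -- initial values and the recursion M̃_j = V_j M̃_{j-1} + d_j
    (hMt0 : Mt 0 = 0) (hM0 : M 0 = 0)
    (hrec : ∀ j, 1 ≤ j → j ≤ ℓ → ∀ ω,
      Mt j ω = V j ω (Mt (j-1) ω) + (M j ω - M (j-1) ω)) :
    eLpNorm (fun ω => ⨆ j : Fin (ℓ+1), ‖Mt (j : ℕ) ω‖) (ENNReal.ofReal p) μ ≤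
      ENNReal.ofReal (30*p) *
        eLpNorm (fun ω => ⨆ j : Fin ℓ, ‖M ((j : ℕ)+1) ω - M (j : ℕ) ω‖)
          (ENNReal.ofReal p) μ
      + ENNReal.ofReal (40*D*Real.sqrt p) *
        eLpNorm (fun ω => Real.sqrt (∑ i ∈ Finset.range ℓ,
            (μ[fun ω' => ‖M (i+1) ω' - M i ω'‖^2 | ℱ i]) ω))
          (ENNReal.ofReal p) μ := by
  set δ : Ω → ℝ := fun ω => ⨆ j : Fin ℓ, ‖M ((j : ℕ) + 1) ω - M (j : ℕ) ω‖ with hδ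
  have hp0 : 0 < p := by linarith
  by_cases htop : eLpNorm δ (ENNReal.ofReal p) μ = ⊤
  · rw [htop, ENNReal.mul_top (by simpa using hp0), top_add]
    exact le_top
  set d : ℕ → Ω → X := fun i => if i < ℓ then M (i + 1) - M i else 0 with hd
  set U : ℕ → Ω → X →L[ℝ] X := fun i => if i < ℓ then V (i + 1) else 0 with hU
  have hd_lt {i : ℕ} (hi : i < ℓ) : d i = M (i + 1) - M i := if_pos hi
  have hU_lt {i : ℕ} (hi : i < ℓ) : U i = V (i + 1) := if_pos hi
  have hd_ge {i : ℕ} (hi : ¬i < ℓ) : d i = 0 := if_neg hi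
  have hU_ge {i : ℕ} (hi : ¬i < ℓ) : U i = 0 := if_neg hi
  have hdm (i : ℕ) : StronglyMeasurable[ℱ (i + 1)] (d i) := by
    by_cases hi : i < ℓ
    · rw [hd_lt hi]
      exact (hM_adapted (i + 1) hi).sub ((hM_adapted i hi.le).mono (ℱ.mono i.le_succ))
    · rw [hd_ge hi]; exact stronglyMeasurable_zero
  have hδm : Measurable δ := Measurable.iSup fun j : Fin ℓ => by
    have := ((hdm j).mono (ℱ.le _)).norm.measurable
    rwa [hd_lt j.2] at this
  have hδ0 (ω : Ω) : 0 ≤ δ ω := Real.iSup_nonneg fun _ => norm_nonneg _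
  have hle (i : ℕ) (hi : i < ℓ) (ω : Ω) : ‖d i ω‖ ≤ δ ω := by
    rw [hd_lt hi]
    exact le_ciSup (f := fun j : Fin ℓ => ‖M ((j : ℕ) + 1) ω - M (j : ℕ) ω‖)
      (Set.finite_range _).bddAbove ⟨i, hi⟩
  have hδL : MemLp δ (ENNReal.ofReal p) μ :=
    ⟨hδm.aestronglyMeasurable, lt_top_iff_ne_top.2 htop⟩
  have hp2 : (2 : ENNReal) ≤ ENNReal.ofReal p := by
    rw [← ENNReal.ofReal_ofNat 2]; exact ENNReal.ofReal_le_ofReal hp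
  have hdriving := isContractiveDriving_of_condExp (μ := μ) (ℱ := ℱ) (V := U) (d := d)
    (fun i ω => by
      by_cases hi : i < ℓ
      · rw [hU_lt hi]; exact hV_contr _ _
      · simp [hU_ge hi])
    (fun i x => by
      by_cases hi : i < ℓ
      · rw [hU_lt hi]; exact hV_pred (i + 1) i.succ_pos hi x
      · simpa [hU_ge hi] using stronglyMeasurable_const)
    hdm
    (fun i => by
      by_cases hi : i < ℓ
      · refine (hδL.mono_exponent hp2).mono ((hdm i).mono (ℱ.le _)).aestronglyMeasurable
          (.of_forall fun ω => ?_)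
        rw [Real.norm_of_nonneg (hδ0 ω)]
        exact hle i hi ω
      · rw [hd_ge hi]; exact MemLp.zero)
    (fun i => by
      by_cases hi : i < ℓ
      · rw [hd_lt hi]
        filter_upwards [condExp_sub (hM_int (i + 1) hi) (hM_int i hi.le) (ℱ i),
          hM_mart i (i + 1) i.le_succ hi, hM_mart i i le_rfl hi.le] with ω h1 h2 h3
        rw [h1, Pi.sub_apply, h2, h3, sub_self, Pi.zero_apply]
      · rw [hd_ge hi, condExp_zero])
  have hMt (j : ℕ) (hj : j ≤ ℓ) : Mt j = affineRecursion U d j := by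
    induction j with
    | zero => exact hMt0
    | succ j ih =>
      ext ω
      rw [hrec (j + 1) j.succ_pos hj ω, Nat.add_sub_cancel, ih (Nat.le_of_succ_le hj)]
      simp only [affineRecursion, hU_lt hj, hd_lt hj, Pi.sub_apply]
  have hmono : eLpNorm (fun ω => ⨆ j : Fin (ℓ + 1), ‖Mt (j : ℕ) ω‖) (ENNReal.ofReal p) μ ≤
      eLpNorm (runningMax (affineRecursion U d) ℓ) (ENNReal.ofReal p) μ := by
    refine eLpNorm_mono_real fun ω => ?_
    rw [Real.norm_of_nonneg (Real.iSup_nonneg fun _ => norm_nonneg _)]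
    refine ciSup_le fun j => ?_
    have hj : (j : ℕ) ≤ ℓ := Nat.lt_succ_iff.1 j.2
    rw [hMt j hj]
    exact le_runningMax _ hj ω
  refine hmono.trans
    ((hdriving.eLpNorm_runningMax_le hD hsmooth hp ℓ hδL hδ0 hle).trans (le_of_eq ?_))
  congr 2
  refine eLpNorm_congr_ae ?_
  have hnn : ∀ᵐ ω ∂μ, ∀ i, 0 ≤ (μ[fun ω => ‖d i ω‖ ^ 2 | ℱ i]) ω :=
    ae_all_iff.2 fun i => condExp_nonneg (.of_forall fun ω => sq_nonneg ‖d i ω‖)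
  filter_upwards [hnn] with ω hω
  congr 1
  refine Finset.sum_congr rfl fun i hi => ?_
  rw [max_eq_left (hω i), hd_lt (Finset.mem_range.1 hi)]
  rfl
end
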